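/- arXiv:2001.11113 — 5 statements merged into one kernel-verified Lean document; each statement's English description precedes it below -/
import Mathlib

section
/- Let P be an n×n irreducible row-stochastic matrix, let d ∈ ℝ^n be a probability vector with strictly positive entries satisfying Pᵀ d = d (a stationary distribution), let d_μ ∈ ℝ^n be a probability vector with strictly positive entries, and let D := diag(d_μ). If τ ∈ ℝ^n satisfies Dτ = Pᵀ(Dτ) and d_μᵀτ = 1, then Dτ = d, i.e., τ = D^{-1} d. -/
/-!
Let `v` be a nonzero nonnegative eigenvector of an irreducible matrix. It has no zero entry: a zero
at `i` would propagate to each `j` through a power of the matrix with positive `(i, j)` entry. If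
`x` is any other eigenvector for the same eigenvalue and `c` is the least of the ratios `x i / v i`,
then `x - c • v` is nonnegative, lies in the same eigenspace and vanishes where the minimum is
attained, so by the same propagation `x = c • v`. Applied to `Pᵀ`, this makes `D τ` a multiple of
`d`, and the two normalizations make the factor `1`.
-/

open Matrix

variable {ι R K : Type*} [Fintype ι]

theorem pow_mulVec_eq_pow_smul [DecidableEq ι] [CommSemiring R] {A : Matrix ι ι R} {r : R}
    {x : ι → R} (hx : A *ᵥ x = r • x) (k : ℕ) : A ^ k *ᵥ x = r ^ k • x := by
  induction k with
  | zero => simp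
  | succ k ih => rw [pow_succ, ← mulVec_mulVec, hx, mulVec_smul, ih, smul_smul, pow_succ']

section OrderedRing

variable [CommRing R] [LinearOrder R] [IsStrictOrderedRing R] {A : Matrix ι ι R} {r : R}
  {x : ι → R}

theorem eq_zero_of_mulVec_eq_smul_of_apply_eq_zero (hA : A.IsIrreducible)
    (hx : A *ᵥ x = r • x) (hx_nonneg : 0 ≤ x) {i : ι} (hi : x i = 0) : x = 0 := by
  classical
  funext j
  obtain ⟨k, -, hk⟩ := (isIrreducible_iff_exists_pow_pos hA.nonneg).1 hA i j
  have hsum : ∑ l, (A ^ k) i l * x l = 0 := calc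
    ∑ l, (A ^ k) i l * x l = r ^ k * x i := congrFun (pow_mulVec_eq_pow_smul hx k) i
    _ = 0 := by rw [hi, mul_zero]
  have hterm : (A ^ k) i j * x j = 0 :=
    (Finset.sum_eq_zero_iff_of_nonneg fun l _ =>
      mul_nonneg (pow_apply_nonneg hA.nonneg k i l) (hx_nonneg l)).1 hsum j (Finset.mem_univ j)
  exact (mul_eq_zero.1 hterm).resolve_left hk.ne'

theorem pos_of_mulVec_eq_smul_of_nonneg (hA : A.IsIrreducible) (hx : A *ᵥ x = r • x)
    (hx_nonneg : 0 ≤ x) (hx_ne : x ≠ 0) (i : ι) : 0 < x i :=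
  (hx_nonneg i).lt_of_ne' fun hi =>
    hx_ne (eq_zero_of_mulVec_eq_smul_of_apply_eq_zero hA hx hx_nonneg hi)

end OrderedRing

section OrderedField

variable [Field K] [LinearOrder K] [IsStrictOrderedRing K] {A : Matrix ι ι K} {r : K}
  {v x : ι → K}

theorem exists_eq_smul_of_mulVec_eq_smul (hA : A.IsIrreducible) (hv : A *ᵥ v = r • v)
    (hv_nonneg : 0 ≤ v) (hv_ne : v ≠ 0) (hx : A *ᵥ x = r • x) : ∃ c : K, x = c • v := by
  have hv_pos : ∀ i, 0 < v i := pos_of_mulVec_eq_smul_of_nonneg hA hv hv_nonneg hv_ne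
  have : Nonempty ι := (Function.ne_iff.1 hv_ne).nonempty
  obtain ⟨i, hi⟩ := Finite.exists_min fun j => x j / v j
  set c := x i / v i
  have heigen : A *ᵥ (x - c • v) = r • (x - c • v) := by
    rw [mulVec_sub, mulVec_smul, hx, hv, smul_sub, smul_comm c r v]
  have hnonneg : 0 ≤ x - c • v := fun j =>
    sub_nonneg.2 ((le_div_iff₀ (hv_pos j)).1 (hi j))
  have hzero : (x - c • v) i = 0 := sub_eq_zero.2 (div_mul_cancel₀ _ (hv_pos i).ne').symm
  exact ⟨c, sub_eq_zero.1 (eq_zero_of_mulVec_eq_smul_of_apply_eq_zero hA heigen hnonneg hzero)⟩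

theorem eq_of_mulVec_eq_smul_of_sum_eq_one (hA : A.IsIrreducible) (hv : A *ᵥ v = r • v)
    (hv_nonneg : 0 ≤ v) (hv_sum : ∑ i, v i = 1) (hx : A *ᵥ x = r • x)
    (hx_sum : ∑ i, x i = 1) : x = v := by
  have hv_ne : v ≠ 0 := by
    rintro rfl
    simp at hv_sum
  obtain ⟨c, rfl⟩ := exists_eq_smul_of_mulVec_eq_smul hA hv hv_nonneg hv_ne hx
  have hc : c = 1 := by
    simpa only [Pi.smul_apply, smul_eq_mul, ← Finset.mul_sum, hv_sum, mul_one] using hx_sum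
  rw [hc, one_smul]

end OrderedField

theorem stmt4_general [DecidableEq ι] [Field K] [LinearOrder K] [IsStrictOrderedRing K]
    {P : Matrix ι ι K} (hP : P.IsIrreducible) {d : ι → K} (hd_nonneg : 0 ≤ d)
    (hd_sum : ∑ i, d i = 1) (hd_stat : Pᵀ *ᵥ d = d) {w : ι → K} (hw : ∀ i, w i ≠ 0)
    {τ : ι → K} (hτ_eig : diagonal w *ᵥ τ = Pᵀ *ᵥ (diagonal w *ᵥ τ))
    (hτ_norm : ∑ i, w i * τ i = 1) :
    diagonal w *ᵥ τ = d ∧ τ = fun i => d i / w i := by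
  have hτ_sum : ∑ i, (diagonal w *ᵥ τ) i = 1 := by simpa only [mulVec_diagonal] using hτ_norm
  have hDτ : diagonal w *ᵥ τ = d :=
    eq_of_mulVec_eq_smul_of_sum_eq_one (r := 1) hP.transpose (by rwa [one_smul]) hd_nonneg hd_sum
      (by rw [one_smul, ← hτ_eig]) hτ_sum
  refine ⟨hDτ, funext fun i => eq_div_of_mul_eq (hw i) ?_⟩
  rw [mul_comm, ← mulVec_diagonal, hDτ]

/-- γ = 1 case. For an irreducible row-stochastic `P` with strictly
positive stationary distribution `d`, strictly positive probability vector `d_μ`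
and `D := diag(d_μ)`: if `Dτ = Pᵀ(Dτ)` and `d_μᵀτ = 1`, then `Dτ = d`,
i.e. `τ = D⁻¹ d`. -/
theorem stmt4 {n : ℕ} (hn : 1 ≤ n) (P : Matrix (Fin n) (Fin n) ℝ)
    (hP_nonneg : ∀ i j, 0 ≤ P i j) (hP_row : ∀ i, ∑ j, P i j = 1)
    (hP_irred : ∀ i j, ∃ k : ℕ, 1 ≤ k ∧ 0 < (P ^ k) i j)
    (d : Fin n → ℝ) (hd_pos : ∀ i, 0 < d i) (hd_sum : ∑ i, d i = 1)
    (hd_stat : P.transpose.mulVec d = d)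
    (dμ : Fin n → ℝ) (hdμ_pos : ∀ i, 0 < dμ i) (hdμ_sum : ∑ i, dμ i = 1)
    (τ : Fin n → ℝ)
    (hτ_eig : (Matrix.diagonal dμ).mulVec τ
        = P.transpose.mulVec ((Matrix.diagonal dμ).mulVec τ))
    (hτ_norm : ∑ i, dμ i * τ i = 1) :
    (Matrix.diagonal dμ).mulVec τ = d ∧ τ = fun i => d i / dμ i :=
  stmt4_general ((isIrreducible_iff_exists_pow_pos hP_nonneg).2 hP_irred) (fun i => (hd_pos i).le)
    hd_sum hd_stat (fun i => (hdμ_pos i).ne') hτ_eig hτ_norm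
end

section
/- Let P be an n×n row-stochastic matrix, μ0 ∈ ℝ^n a probability vector, γ ∈ [0,1), d_μ ∈ ℝ^n a probability vector with strictly positive entries, D := diag(d_μ), λ > 0, and define for τ ∈ ℝ^n: L(τ) := (1/2) Σ_i ((Tτ − Dτ)_i)² / (d_μ)_i + (λ/2)(d_μᵀτ − 1)², where Tτ := (1−γ)μ0 + γPᵀDτ. Then L(τ*) = 0 for τ* := D^{-1}(1−γ)(I − γPᵀ)^{-1}μ0, and L(τ) > 0 for every τ ≠ τ*; i.e., τ minimizes L over ℝ^n if and only if τ = τ*. -/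
/-!
Put `A = I - γPᵀ`. In the variable `y = Dτ` the first term of the objective is a weighted sum of
squares of `(1-γ)μ₀ - Ay`, so it vanishes exactly at `y = (1-γ)A⁻¹μ₀`, that is at `τ = τ*`. The
penalty vanishes there too: `P1 = 1` gives `1ᵀA = (1-γ)1ᵀ`, whence `(1-γ)1ᵀA⁻¹ = 1ᵀ` and the total
mass of `y` equals that of `μ₀`. Since `A` transposed is strictly diagonally dominant, `A` is
invertible.
-/

open Matrix

theorem forall_le_iff_eq_of_forall_ne_lt {α β : Type*} [Preorder β] {f : α → β} {a : α}
    (hf : ∀ x, x ≠ a → f a < f x) (x : α) : (∀ y, f x ≤ f y) ↔ x = a := by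
  constructor
  · intro hmin
    by_contra hx
    exact (hf x hx).not_ge (hmin a)
  · rintro rfl y
    rcases eq_or_ne y x with rfl | hy
    · exact le_rfl
    · exact (hf y hy).le

section WeightedVectors

variable {ι K : Type*} [Fintype ι]

theorem sum_sq_div_pos [Field K] [LinearOrder K] [IsStrictOrderedRing K] {r d : ι → K}
    (hd : ∀ i, 0 < d i) (hr : r ≠ 0) : 0 < ∑ i, r i ^ 2 / d i := by
  obtain ⟨i, hi⟩ := Function.ne_iff.1 hr
  exact Finset.sum_pos' (fun j _ => div_nonneg (sq_nonneg (r j)) (hd j).le)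
    ⟨i, Finset.mem_univ i, div_pos (sq_pos_of_ne_zero hi) (hd i)⟩

variable [Semifield K] {d : ι → K}

theorem dotProduct_div_eq_one_dotProduct (hd : ∀ i, d i ≠ 0) (y : ι → K) :
    d ⬝ᵥ (y / d) = 1 ⬝ᵥ y := by
  simp only [dotProduct, Pi.div_apply, Pi.one_apply, one_mul, mul_div_cancel₀ _ (hd _)]

theorem diagonal_mulVec_eq_iff_eq_div [DecidableEq ι] (hd : ∀ i, d i ≠ 0) (τ y : ι → K) :
    diagonal d *ᵥ τ = y ↔ τ = y / d := by
  simp only [funext_iff, mulVec_diagonal, Pi.div_apply, eq_div_iff (hd _), mul_comm]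

end WeightedVectors

section Invertibility

variable {ι : Type*} [Fintype ι] [DecidableEq ι]

theorem isUnit_one_sub_of_sum_norm_row_lt_one {K : Type*} [NormedField K] {A : Matrix ι ι K}
    (hA : ∀ i, ∑ j, ‖A i j‖ < 1) : IsUnit (1 - A) := by
  rw [isUnit_iff_isUnit_det, isUnit_iff_ne_zero]
  refine det_ne_zero_of_sum_row_lt_diag fun k => ?_
  calc ∑ j ∈ Finset.univ.erase k, ‖(1 - A) k j‖
      = ∑ j ∈ Finset.univ.erase k, ‖A k j‖ := by
        refine Finset.sum_congr rfl fun j hj => ?_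
        rw [Matrix.sub_apply, one_apply_ne (Finset.ne_of_mem_erase hj).symm, zero_sub, norm_neg]
    _ < ‖(1 : K)‖ - ‖A k k‖ := by
        rw [norm_one, lt_sub_iff_add_lt, Finset.sum_erase_add _ _ (Finset.mem_univ k)]
        exact hA k
    _ ≤ ‖(1 - A) k k‖ := by
        rw [Matrix.sub_apply, one_apply_eq]
        exact norm_sub_norm_le 1 (A k k)

theorem isUnit_one_sub_smul_transpose_of_mem_rowStochastic {P : Matrix ι ι ℝ}
    (hP : P ∈ rowStochastic ℝ ι) {γ : ℝ} (hγ : |γ| < 1) : IsUnit (1 - γ • Pᵀ) := by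
  have hrow (i : ι) : ∑ j, ‖(γ • P) i j‖ < 1 :=
    calc ∑ j, ‖(γ • P) i j‖ = |γ| * ∑ j, P i j := by
          simp only [Matrix.smul_apply, norm_smul, Real.norm_eq_abs, Finset.mul_sum,
            abs_of_nonneg (nonneg_of_mem_rowStochastic hP)]
      _ < 1 := by rwa [sum_row_of_mem_rowStochastic hP, mul_one]
  rw [← isUnit_transpose]
  simpa using isUnit_one_sub_of_sum_norm_row_lt_one hrow

end Invertibility

section LinearSystem

variable {ι R : Type*} [Fintype ι] [DecidableEq ι] [CommRing R] {P : Matrix ι ι R} {γ : R}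

theorem mulVec_eq_iff_eq_inv_mulVec {A : Matrix ι ι R} (hA : IsUnit A) (x b : ι → R) :
    A *ᵥ x = b ↔ x = A⁻¹ *ᵥ b := by
  have := hA.invertible
  constructor
  · rintro rfl
    exact (inv_mulVec_eq_vec rfl).symm
  · rintro rfl
    rw [mulVec_mulVec, mul_inv_of_invertible, one_mulVec]

/-- The normalized discounted occupancy vector `(1 - γ)(I - γPᵀ)⁻¹μ₀` of a Markov chain with
transition matrix `P` started from `μ₀`; the minimizer `τ*` is its ratio to `d_μ`. -/
noncomputable def discountedOccupancy (P : Matrix ι ι R) (γ : R) (μ₀ : ι → R) : ι → R :=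
  (1 - γ) • ((1 - γ • Pᵀ)⁻¹ *ᵥ μ₀)

/-- The residual `(1 - γ)μ₀ + γPᵀy - y` of the flow equation for discounted occupancies. It equals
`Tτ - Dτ` at `y = Dτ`. -/
def flowResidual (P : Matrix ι ι R) (γ : R) (μ₀ y : ι → R) : ι → R :=
  (1 - γ) • μ₀ + γ • (Pᵀ *ᵥ y) - y

theorem flowResidual_eq_zero_iff (hA : IsUnit (1 - γ • Pᵀ)) (μ₀ y : ι → R) :
    flowResidual P γ μ₀ y = 0 ↔ y = discountedOccupancy P γ μ₀ :=
  calc flowResidual P γ μ₀ y = 0 ↔ (1 - γ • Pᵀ) *ᵥ y = (1 - γ) • μ₀ := by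
        rw [flowResidual, sub_eq_zero, sub_mulVec, one_mulVec, smul_mulVec, sub_eq_iff_eq_add,
          eq_comm]
    _ ↔ y = discountedOccupancy P γ μ₀ := by
        rw [mulVec_eq_iff_eq_inv_mulVec hA, mulVec_smul, discountedOccupancy]

theorem one_dotProduct_discountedOccupancy (hP : P *ᵥ 1 = 1) (hA : IsUnit (1 - γ • Pᵀ))
    (μ₀ : ι → R) : 1 ⬝ᵥ discountedOccupancy P γ μ₀ = 1 ⬝ᵥ μ₀ := by
  have := hA.invertible
  have hleft : 1 ᵥ* (1 - γ • Pᵀ) = (1 - γ) • (1 : ι → R) := by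
    rw [vecMul_sub, vecMul_one, vecMul_smul, vecMul_transpose, hP, sub_smul, one_smul]
  calc 1 ⬝ᵥ discountedOccupancy P γ μ₀
      = (((1 - γ) • (1 : ι → R)) ᵥ* (1 - γ • Pᵀ)⁻¹) ⬝ᵥ μ₀ := by
        rw [discountedOccupancy, dotProduct_smul, ← smul_dotProduct, dotProduct_mulVec,
          smul_vecMul]
    _ = 1 ⬝ᵥ μ₀ := by rw [← hleft, vecMul_vecMul, mul_inv_of_invertible, vecMul_one]

end LinearSystem

section GradientDICE

variable {ι K : Type*} [Fintype ι] [DecidableEq ι] [Field K] {P : Matrix ι ι K} {γ : K}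
  {μ₀ d : ι → K}

/-- The GradientDICE objective `½‖Tτ - Dτ‖²_{D⁻¹} + (λ/2)(dᵀτ - 1)²` with `D = diag d`, where
`lam` stands for `λ`. -/
noncomputable def gradientDICE (P : Matrix ι ι K) (γ : K) (μ₀ d : ι → K) (lam : K)
    (τ : ι → K) : K :=
  (1 / 2) * ∑ i, flowResidual P γ μ₀ (diagonal d *ᵥ τ) i ^ 2 / d i
    + (lam / 2) * (d ⬝ᵥ τ - 1) ^ 2

theorem flowResidual_diagonal_mulVec_eq_zero_iff (hA : IsUnit (1 - γ • Pᵀ)) (hd : ∀ i, d i ≠ 0)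
    (μ₀ τ : ι → K) :
    flowResidual P γ μ₀ (diagonal d *ᵥ τ) = 0 ↔ τ = discountedOccupancy P γ μ₀ / d := by
  rw [flowResidual_eq_zero_iff hA, diagonal_mulVec_eq_iff_eq_div hd]

theorem gradientDICE_discountedOccupancy_div (hP : P *ᵥ 1 = 1) (hA : IsUnit (1 - γ • Pᵀ))
    (hμ₀ : ∑ i, μ₀ i = 1) (hd : ∀ i, d i ≠ 0) (lam : K) :
    gradientDICE P γ μ₀ d lam (discountedOccupancy P γ μ₀ / d) = 0 := by
  have hres := (flowResidual_diagonal_mulVec_eq_zero_iff hA hd μ₀ _).2 rfl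
  have hmass : d ⬝ᵥ (discountedOccupancy P γ μ₀ / d) = 1 := by
    rw [dotProduct_div_eq_one_dotProduct hd, one_dotProduct_discountedOccupancy hP hA,
      one_dotProduct, hμ₀]
  simp [gradientDICE, hres, hmass]

variable [LinearOrder K] [IsStrictOrderedRing K] {lam : K}

theorem gradientDICE_pos (hA : IsUnit (1 - γ • Pᵀ)) (hd : ∀ i, 0 < d i) (hlam : 0 ≤ lam)
    {τ : ι → K} (hτ : τ ≠ discountedOccupancy P γ μ₀ / d) : 0 < gradientDICE P γ μ₀ d lam τ := by
  have hres := sum_sq_div_pos hd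
    (mt (flowResidual_diagonal_mulVec_eq_zero_iff hA (fun i => (hd i).ne') μ₀ τ).1 hτ)
  rw [gradientDICE]
  positivity

theorem stmt5_general (hP : P *ᵥ 1 = 1) (hA : IsUnit (1 - γ • Pᵀ)) (hμ₀ : ∑ i, μ₀ i = 1)
    (hd : ∀ i, 0 < d i) (hlam : 0 ≤ lam) :
    gradientDICE P γ μ₀ d lam (discountedOccupancy P γ μ₀ / d) = 0 ∧
      (∀ τ, τ ≠ discountedOccupancy P γ μ₀ / d → 0 < gradientDICE P γ μ₀ d lam τ) ∧
      (∀ τ, (∀ τ', gradientDICE P γ μ₀ d lam τ ≤ gradientDICE P γ μ₀ d lam τ') ↔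
        τ = discountedOccupancy P γ μ₀ / d) := by
  have hzero := gradientDICE_discountedOccupancy_div hP hA hμ₀ (fun i => (hd i).ne') lam
  have hpos (τ : ι → K) (hτ : τ ≠ discountedOccupancy P γ μ₀ / d) :
      0 < gradientDICE P γ μ₀ d lam τ := gradientDICE_pos hA hd hlam hτ
  exact ⟨hzero, hpos, forall_le_iff_eq_of_forall_ne_lt fun τ hτ => hzero.trans_lt (hpos τ hτ)⟩

end GradientDICE

/-- The GradientDICE objective
`L(τ) = (1/2)‖Tτ - Dτ‖²_{D⁻¹} + (λ/2)(d_μᵀτ - 1)²` with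
`Tτ = (1-γ)μ0 + γPᵀDτ` vanishes at `τ* = D⁻¹(1-γ)(I-γPᵀ)⁻¹μ0` and is strictly
positive elsewhere; hence `τ` minimizes `L` iff `τ = τ*`. -/
theorem stmt5 {n : ℕ} (hn : 1 ≤ n) (P : Matrix (Fin n) (Fin n) ℝ)
    (hP_nonneg : ∀ i j, 0 ≤ P i j) (hP_row : ∀ i, ∑ j, P i j = 1)
    (γ : ℝ) (hγ0 : 0 ≤ γ) (hγ1 : γ < 1)
    (μ0 : Fin n → ℝ) (hμ0_nonneg : ∀ i, 0 ≤ μ0 i) (hμ0_sum : ∑ i, μ0 i = 1)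
    (dμ : Fin n → ℝ) (hdμ_pos : ∀ i, 0 < dμ i) (hdμ_sum : ∑ i, dμ i = 1)
    (lam : ℝ) (hlam : 0 < lam)
    (L : (Fin n → ℝ) → ℝ)
    (hL : ∀ τ, L τ =
      (1/2) * ∑ i, (((1 - γ) • μ0
          + γ • P.transpose.mulVec ((Matrix.diagonal dμ).mulVec τ)
          - (Matrix.diagonal dμ).mulVec τ) i) ^ 2 / dμ i
      + (lam/2) * ((∑ i, dμ i * τ i) - 1) ^ 2)
    (τstar : Fin n → ℝ)
    (hτstar : τstar = fun i =>
      ((1 - γ) • (((1 : Matrix (Fin n) (Fin n) ℝ) - γ • P.transpose)⁻¹.mulVec μ0)) i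
        / dμ i) :
    L τstar = 0 ∧ (∀ τ, τ ≠ τstar → 0 < L τ) ∧
      (∀ τ, (∀ τ', L τ ≤ L τ') ↔ τ = τstar) := by
  obtain rfl : L = gradientDICE P γ μ0 dμ lam := funext hL
  obtain rfl : τstar = discountedOccupancy P γ μ0 / dμ := hτstar
  have hP : P ∈ rowStochastic ℝ (Fin n) := mem_rowStochastic_iff_sum.2 ⟨hP_nonneg, hP_row⟩
  exact stmt5_general hP.2 (isUnit_one_sub_smul_transpose_of_mem_rowStochastic hP
    (abs_lt.2 ⟨by linarith, hγ1⟩)) hμ0_sum hdμ_pos hlam.le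
end

section
/- Let P be an n×n row-stochastic matrix, μ0 ∈ ℝ^n a probability vector, γ ∈ [0,1], d_μ ∈ ℝ^n a probability vector with strictly positive entries, D := diag(d_μ), λ > 0, and for τ, f ∈ ℝ^n, η ∈ ℝ define L(τ, η, f) := (1−γ)μ0ᵀf + γ(Dτ)ᵀ(P f) − τᵀD f − (1/2)Σ_i (d_μ)_i f_i² + λ(η(d_μᵀτ − 1) − η²/2). Then: (i) for every fixed (f, η), the map τ ↦ L(τ, η, f) is affine on ℝ^n (in particular both convex and concave); and (ii) for every fixed τ, the map (f, η) ↦ L(τ, η, f) is concave on ℝ^n × ℝ. -/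
open Matrix

/-!
Both claims are read off the objective. Collecting the terms that contain `τ`, it is a linear
functional of `τ` plus its value at `τ = 0`. Collecting the terms that contain `(f, η)`, it is a
linear functional of `(f, η)` minus `½ ∑ dᵢ fᵢ² + ½ λ η²`, which is convex because the weights `dᵢ`
and `λ` are nonnegative.
-/

theorem diagonal_mulVec_dotProduct {R ι : Type*} [CommSemiring R] [Fintype ι] [DecidableEq ι]
    (d v w : ι → R) : (diagonal d *ᵥ v) ⬝ᵥ w = v ⬝ᵥ (diagonal d *ᵥ w) := by
  rw [dotProduct_mulVec, ← mulVec_transpose, diagonal_transpose]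

theorem convexOn_finset_sum {𝕜 E β κ : Type*} [Semiring 𝕜] [PartialOrder 𝕜] [AddCommMonoid E]
    [AddCommMonoid β] [PartialOrder β] [IsOrderedAddMonoid β] [SMul 𝕜 E] [Module 𝕜 β]
    {s : Set E} (hs : Convex 𝕜 s) (t : Finset κ) {φ : κ → E → β}
    (hφ : ∀ i ∈ t, ConvexOn 𝕜 s (φ i)) : ConvexOn 𝕜 s (fun x => ∑ i ∈ t, φ i x) := by
  have hsum : ConvexOn 𝕜 s (∑ i ∈ t, φ i) :=
    Finset.sum_induction φ (ConvexOn 𝕜 s) (fun _ _ => ConvexOn.add) (convexOn_const 0 hs) hφ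
  simpa only [Finset.sum_fn] using hsum

section Quadratic

variable {𝕜 : Type*} [Field 𝕜] [LinearOrder 𝕜] [IsStrictOrderedRing 𝕜]

theorem convexOn_const_mul_linearMap_sq {E : Type*} [AddCommGroup E] [Module 𝕜 E] {w : 𝕜}
    (hw : 0 ≤ w) (g : E →ₗ[𝕜] 𝕜) : ConvexOn 𝕜 Set.univ (fun x => w * g x ^ 2) := by
  have hsq : ConvexOn 𝕜 Set.univ (fun y : 𝕜 => y ^ 2) := even_two.convexOn_pow
  exact (hsq.comp_linearMap g).smul hw

theorem convexOn_sum_mul_linearMap_sq {E κ : Type*} [AddCommGroup E] [Module 𝕜 E] (t : Finset κ)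
    {w : κ → 𝕜} (hw : ∀ i ∈ t, 0 ≤ w i) (g : κ → E →ₗ[𝕜] 𝕜) :
    ConvexOn 𝕜 Set.univ (fun x => ∑ i ∈ t, w i * g i x ^ 2) :=
  convexOn_finset_sum convex_univ t fun i hi => convexOn_const_mul_linearMap_sq (hw i hi) (g i)

end Quadratic

section Objective

variable {𝕜 ι : Type*} [Field 𝕜] [Fintype ι] [DecidableEq ι]

/-- The GradientDICE objective `L(τ, η, f)` with transition matrix `P`, discount `γ`, initial
distribution `μ₀`, sampling distribution `d` (the paper's `d_μ`) and penalty weight `lam` (the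
paper's `λ`), over an arbitrary field and finite state space. -/
def gradientDICEObjective (P : Matrix ι ι 𝕜) (γ : 𝕜) (μ₀ d : ι → 𝕜) (lam : 𝕜)
    (τ : ι → 𝕜) (η : 𝕜) (f : ι → 𝕜) : 𝕜 :=
  (1 - γ) * (μ₀ ⬝ᵥ f) + γ * ((diagonal d *ᵥ τ) ⬝ᵥ (P *ᵥ f)) - τ ⬝ᵥ (diagonal d *ᵥ f)
    - (1 / 2) * ∑ i, d i * f i ^ 2 + lam * (η * ((∑ i, d i * τ i) - 1) - η ^ 2 / 2)

variable (P : Matrix ι ι 𝕜) (γ : 𝕜) (μ₀ d : ι → 𝕜) (lam : 𝕜)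

theorem gradientDICEObjective_eq_dotProduct_add (τ : ι → 𝕜) (η : 𝕜) (f : ι → 𝕜) :
    gradientDICEObjective P γ μ₀ d lam τ η f =
      (diagonal d *ᵥ (γ • (P *ᵥ f) - f) + (lam * η) • d) ⬝ᵥ τ
        + gradientDICEObjective P γ μ₀ d lam 0 η f := by
  have hd : ∑ i, d i * τ i = d ⬝ᵥ τ := rfl
  simp only [gradientDICEObjective, hd, diagonal_mulVec_dotProduct, dotProduct_comm _ τ,
    mulVec_sub, mulVec_smul, dotProduct_add, dotProduct_sub, dotProduct_smul, zero_dotProduct,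
    smul_eq_mul, Pi.zero_apply, mul_zero, Finset.sum_const_zero]
  ring

theorem gradientDICEObjective_eq_linear_sub_quadratic (τ : ι → 𝕜) (η : 𝕜) (f : ι → 𝕜) :
    gradientDICEObjective P γ μ₀ d lam τ η f =
      (((1 - γ) • μ₀ + γ • ((diagonal d *ᵥ τ) ᵥ* P) - diagonal d *ᵥ τ) ⬝ᵥ f
          + (lam * (d ⬝ᵥ τ - 1)) * η)
        - ((∑ i, d i / 2 * f i ^ 2) + lam / 2 * η ^ 2) := by
  have hd : ∑ i, d i * τ i = d ⬝ᵥ τ := rfl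
  have hsq : ∑ i, d i / 2 * f i ^ 2 = (1 / 2) * ∑ i, d i * f i ^ 2 := by
    rw [Finset.mul_sum]
    exact Finset.sum_congr rfl fun i _ => by ring
  simp only [gradientDICEObjective, hd, hsq, diagonal_mulVec_dotProduct d τ f,
    dotProduct_mulVec, add_dotProduct, sub_dotProduct, smul_dotProduct, smul_eq_mul]
  ring

theorem exists_gradientDICEObjective_eq_linearMap_add_const (η : 𝕜) (f : ι → 𝕜) :
    ∃ (g : (ι → 𝕜) →ₗ[𝕜] 𝕜) (c : 𝕜), ∀ τ, gradientDICEObjective P γ μ₀ d lam τ η f = g τ + c :=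
  ⟨dotProductBilin 𝕜 𝕜 _, _, fun τ => gradientDICEObjective_eq_dotProduct_add P γ μ₀ d lam τ η f⟩

variable [LinearOrder 𝕜] [IsStrictOrderedRing 𝕜]

theorem convexOn_concaveOn_gradientDICEObjective (η : 𝕜) (f : ι → 𝕜) :
    ConvexOn 𝕜 Set.univ (fun τ => gradientDICEObjective P γ μ₀ d lam τ η f) ∧
      ConcaveOn 𝕜 Set.univ (fun τ => gradientDICEObjective P γ μ₀ d lam τ η f) := by
  obtain ⟨g, c, hgc⟩ := exists_gradientDICEObjective_eq_linearMap_add_const P γ μ₀ d lam η f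
  simp only [hgc]
  exact ⟨(g.convexOn convex_univ).add_const c, (g.concaveOn convex_univ).add_const c⟩

variable {d lam}

theorem concaveOn_gradientDICEObjective_dual (hd : ∀ i, 0 ≤ d i) (hlam : 0 ≤ lam) (τ : ι → 𝕜) :
    ConcaveOn 𝕜 Set.univ
      (fun p : (ι → 𝕜) × 𝕜 => gradientDICEObjective P γ μ₀ d lam τ p.2 p.1) := by
  let linearPart : (ι → 𝕜) × 𝕜 →ₗ[𝕜] 𝕜 :=
    (dotProductBilin 𝕜 𝕜 ((1 - γ) • μ₀ + γ • ((diagonal d *ᵥ τ) ᵥ* P) - diagonal d *ᵥ τ)).coprod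
      (LinearMap.mulLeft 𝕜 (lam * (d ⬝ᵥ τ - 1)))
  have hf : ConvexOn 𝕜 Set.univ (fun p : (ι → 𝕜) × 𝕜 => ∑ i, d i / 2 * p.1 i ^ 2) :=
    convexOn_sum_mul_linearMap_sq Finset.univ (fun i _ => div_nonneg (hd i) zero_le_two)
      fun i => LinearMap.proj i ∘ₗ LinearMap.fst 𝕜 (ι → 𝕜) 𝕜
  have hη : ConvexOn 𝕜 Set.univ (fun p : (ι → 𝕜) × 𝕜 => lam / 2 * p.2 ^ 2) :=
    convexOn_const_mul_linearMap_sq (div_nonneg hlam zero_le_two) (LinearMap.snd 𝕜 (ι → 𝕜) 𝕜)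
  simp only [gradientDICEObjective_eq_linear_sub_quadratic]
  exact (linearPart.concaveOn convex_univ).sub (hf.add hη)

theorem stmt8_general (hd : ∀ i, 0 ≤ d i) (hlam : 0 ≤ lam) :
    (∀ f η, ∃ (g : (ι → 𝕜) →ₗ[𝕜] 𝕜) (c : 𝕜),
      ∀ τ, gradientDICEObjective P γ μ₀ d lam τ η f = g τ + c) ∧
    (∀ f η, ConvexOn 𝕜 Set.univ (fun τ => gradientDICEObjective P γ μ₀ d lam τ η f) ∧
      ConcaveOn 𝕜 Set.univ (fun τ => gradientDICEObjective P γ μ₀ d lam τ η f)) ∧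
    (∀ τ, ConcaveOn 𝕜 Set.univ
      (fun p : (ι → 𝕜) × 𝕜 => gradientDICEObjective P γ μ₀ d lam τ p.2 p.1)) :=
  ⟨fun f η => exists_gradientDICEObjective_eq_linearMap_add_const P γ μ₀ d lam η f,
    fun f η => convexOn_concaveOn_gradientDICEObjective P γ μ₀ d lam η f,
    concaveOn_gradientDICEObjective_dual P γ μ₀ hd hlam⟩

end Objective

/-- The GradientDICE saddle-point objective is (i) affine (hence
convex and concave) in `τ` for fixed `(f, η)`, and (ii) concave in `(f, η)`
for fixed `τ`: a convex-concave saddle-point problem without positivity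
constraints on `τ`. -/
theorem stmt8 {n : ℕ} (hn : 1 ≤ n) (P : Matrix (Fin n) (Fin n) ℝ)
    (hP_nonneg : ∀ i j, 0 ≤ P i j) (hP_row : ∀ i, ∑ j, P i j = 1)
    (γ : ℝ) (hγ0 : 0 ≤ γ) (hγ1 : γ ≤ 1)
    (μ0 : Fin n → ℝ) (hμ0_nonneg : ∀ i, 0 ≤ μ0 i) (hμ0_sum : ∑ i, μ0 i = 1)
    (dμ : Fin n → ℝ) (hdμ_pos : ∀ i, 0 < dμ i) (hdμ_sum : ∑ i, dμ i = 1)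
    (lam : ℝ) (hlam : 0 < lam)
    (L : (Fin n → ℝ) → ℝ → (Fin n → ℝ) → ℝ)
    (hLdef : ∀ τ η f, L τ η f =
      (1 - γ) * (μ0 ⬝ᵥ f)
      + γ * (((Matrix.diagonal dμ).mulVec τ) ⬝ᵥ (P.mulVec f))
      - τ ⬝ᵥ ((Matrix.diagonal dμ).mulVec f)
      - (1/2) * ∑ i, dμ i * (f i) ^ 2
      + lam * (η * ((∑ i, dμ i * τ i) - 1) - η ^ 2 / 2)) :
    (∀ f η, ∃ (g : (Fin n → ℝ) →ₗ[ℝ] ℝ) (c : ℝ), ∀ τ, L τ η f = g τ + c) ∧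
    (∀ f η, ConvexOn ℝ Set.univ (fun τ => L τ η f) ∧
            ConcaveOn ℝ Set.univ (fun τ => L τ η f)) ∧
    (∀ τ, ConcaveOn ℝ Set.univ (fun p : (Fin n → ℝ) × ℝ => L τ p.2 p.1)) := by
  obtain rfl : L = gradientDICEObjective P γ μ0 dμ lam := by
    funext τ η f
    exact hLdef τ η f
  exact stmt8_general P γ μ0 (fun i => (hdμ_pos i).le) hlam.le
end

section
/- Let C be a K×K real symmetric positive-definite matrix, A a K×K real matrix, b, m ∈ ℝ^K, λ > 0, ξ ≥ 0, γ ∈ [0,1], and assume ξI + AᵀC^{-1}A is positive definite. Define Ξ := (ξI + AᵀC^{-1}A)^{-1}, z := Ξb, β := 1 + λ bᵀΞb, w_{∞,ξ} := (1−γ)ΞAᵀC^{-1}m + λβ^{-1} z (1 − (1−γ) zᵀAᵀC^{-1}m), and b_* := (1−γ)AᵀC^{-1}m + λb. Then (AᵀC^{-1}A + λ b bᵀ + ξI) w_{∞,ξ} = b_*. -/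
open Matrix

/-- The coefficient of `y` comes from matching multiples of `u`: with `β = 1 + r * (v ⬝ᵥ y)`, the
update sends `x` to `M *ᵥ x + (r * (v ⬝ᵥ x)) • u` and `y` to `β • u`. -/
theorem add_smul_vecMulVec_mulVec_add_smul {m n 𝕜 : Type*} [Fintype n] [Field 𝕜]
    {M : Matrix m n 𝕜} {u : m → 𝕜} {v y : n → 𝕜} {r : 𝕜} (hy : M *ᵥ y = u)
    (hβ : 1 + r * (v ⬝ᵥ y) ≠ 0) (x : n → 𝕜) :
    (M + r • vecMulVec u v) *ᵥ (x + (r * (1 + r * (v ⬝ᵥ y))⁻¹ * (1 - v ⬝ᵥ x)) • y) =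
      M *ᵥ x + r • u := by
  have hupdate (w : n → 𝕜) :
      (M + r • vecMulVec u v) *ᵥ w = M *ᵥ w + (r * (v ⬝ᵥ w)) • u := by
    rw [add_mulVec, smul_mulVec, vecMulVec_mulVec, op_smul_eq_smul, smul_smul]
  have hupdate_y : (M + r • vecMulVec u v) *ᵥ y = (1 + r * (v ⬝ᵥ y)) • u := by
    rw [hupdate, hy, add_smul, one_smul]
  have hcoeff : r * (v ⬝ᵥ x) +
      r * (1 + r * (v ⬝ᵥ y))⁻¹ * (1 - v ⬝ᵥ x) * (1 + r * (v ⬝ᵥ y)) = r := by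
    field_simp
    ring
  rw [mulVec_add, mulVec_smul, hupdate, hupdate_y, smul_smul, add_assoc, ← add_smul, hcoeff]

theorem mulVec_dotProduct_of_isSymm {n R : Type*} [Fintype n] [NonUnitalCommSemiring R]
    {M : Matrix n n R} (hM : M.IsSymm) (v w : n → R) : M *ᵥ v ⬝ᵥ w = v ⬝ᵥ M *ᵥ w := by
  rw [dotProduct_mulVec, ← mulVec_transpose, hM.eq]

theorem one_add_mul_dotProduct_mulVec_pos {n R : Type*} [Fintype n] [Ring R] [PartialOrder R]
    [IsStrictOrderedRing R] [StarRing R] {M : Matrix n n R} (hM : M.PosSemidef) {r : R}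
    (hr : 0 ≤ r) (v : n → R) : 0 < 1 + r * (star v ⬝ᵥ M *ᵥ v) :=
  add_pos_of_pos_of_nonneg one_pos (mul_nonneg hr (hM.dotProduct_mulVec_nonneg v))

/-- `D` plays the role of `C⁻¹`. -/
theorem stmt12_general {l n 𝕜 : Type*} [Fintype l] [Fintype n] [DecidableEq n] [Field 𝕜]
    {A : Matrix l n 𝕜} {D : Matrix l l 𝕜} {Ξ : Matrix n n 𝕜} {b : n → 𝕜} {lam ξ : 𝕜}
    (hΞ : (ξ • (1 : Matrix n n 𝕜) + Aᵀ * D * A) * Ξ = 1) (hsymm : Ξ.IsSymm)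
    (hβ : 1 + lam * (b ⬝ᵥ Ξ *ᵥ b) ≠ 0) (γ : 𝕜) (m : l → 𝕜) :
    (Aᵀ * D * A + lam • vecMulVec b b + ξ • (1 : Matrix n n 𝕜)) *ᵥ
        ((1 - γ) • (Ξ * Aᵀ * D) *ᵥ m +
          (lam * (1 + lam * (b ⬝ᵥ Ξ *ᵥ b))⁻¹ *
            (1 - (1 - γ) * (Ξ *ᵥ b ⬝ᵥ (Aᵀ * D) *ᵥ m))) • Ξ *ᵥ b) =
      (1 - γ) • (Aᵀ * D) *ᵥ m + lam • b := by
  have hsolve (v : n → 𝕜) : (ξ • (1 : Matrix n n 𝕜) + Aᵀ * D * A) *ᵥ Ξ *ᵥ v = v := by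
    rw [mulVec_mulVec, hΞ, one_mulVec]
  have hmatrix : Aᵀ * D * A + lam • vecMulVec b b + ξ • (1 : Matrix n n 𝕜) =
      ξ • (1 : Matrix n n 𝕜) + Aᵀ * D * A + lam • vecMulVec b b := by abel
  have hmulVec : (Ξ * Aᵀ * D) *ᵥ m = Ξ *ᵥ (Aᵀ * D) *ᵥ m := by
    rw [mulVec_mulVec, Matrix.mul_assoc]
  have hdot : (1 - γ) * (Ξ *ᵥ b ⬝ᵥ (Aᵀ * D) *ᵥ m) =
      b ⬝ᵥ (1 - γ) • Ξ *ᵥ (Aᵀ * D) *ᵥ m := by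
    rw [mulVec_dotProduct_of_isSymm hsymm, dotProduct_smul, smul_eq_mul]
  rw [hmatrix, hmulVec, hdot, add_smul_vecMulVec_mulVec_add_smul (hsolve b) hβ, mulVec_smul,
    hsolve]

/-- Sherman–Morrison identity for the GradientDICE fixed point.
With `Ξ := (ξI + AᵀC⁻¹A)⁻¹`, `z := Ξb`, `β := 1 + λ bᵀΞb`,
`w_{∞,ξ} := (1-γ)ΞAᵀC⁻¹m + λβ⁻¹ z (1 - (1-γ) zᵀAᵀC⁻¹m)` and
`b_* := (1-γ)AᵀC⁻¹m + λb`, we have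
`(AᵀC⁻¹A + λ b bᵀ + ξI) w_{∞,ξ} = b_*`. -/
theorem stmt12 {K : ℕ} (hK : 1 ≤ K)
    (C A : Matrix (Fin K) (Fin K) ℝ) (hC : C.PosDef)
    (b m : Fin K → ℝ) (lam ξ γ : ℝ) (hlam : 0 < lam) (hξ : 0 ≤ ξ)
    (hγ0 : 0 ≤ γ) (hγ1 : γ ≤ 1)
    (hΞ : (ξ • (1 : Matrix (Fin K) (Fin K) ℝ) + A.transpose * C⁻¹ * A).PosDef) :
    (A.transpose * C⁻¹ * A + lam • (Matrix.of fun i j => b i * b j)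
        + ξ • (1 : Matrix (Fin K) (Fin K) ℝ)).mulVec
      ((1 - γ) • ((ξ • (1 : Matrix (Fin K) (Fin K) ℝ)
            + A.transpose * C⁻¹ * A)⁻¹ * A.transpose * C⁻¹).mulVec m
        + (lam * (1 + lam * (b ⬝ᵥ ((ξ • (1 : Matrix (Fin K) (Fin K) ℝ)
              + A.transpose * C⁻¹ * A)⁻¹.mulVec b)))⁻¹
            * (1 - (1 - γ) * (((ξ • (1 : Matrix (Fin K) (Fin K) ℝ)
              + A.transpose * C⁻¹ * A)⁻¹.mulVec b)
                ⬝ᵥ ((A.transpose * C⁻¹).mulVec m))))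
          • ((ξ • (1 : Matrix (Fin K) (Fin K) ℝ)
              + A.transpose * C⁻¹ * A)⁻¹.mulVec b))
      = (1 - γ) • (A.transpose * C⁻¹).mulVec m + lam • b :=
  stmt12_general (mul_nonsing_inv _ hΞ.det_pos.ne'.isUnit)
    (isHermitian_iff_isSymm.mp hΞ.inv.isHermitian)
    (one_add_mul_dotProduct_mulVec_pos hΞ.inv.posSemidef hlam.le b).ne' γ m
end

section
/- Define J : ℝ⁵ → ℝ by J(τ₁, τ₂, f₁, f₂, η) := (1/4)τ₁²f₁ + (1/4)τ₁²f₂ + (1/4)τ₂²f₁ + (1/4)τ₂²f₂ − (1/2)τ₁²(f₁ + (1/4)f₁²) − (1/2)τ₂²(f₂ + (1/4)f₂²) + (1/2)ητ₁² + (1/2)ητ₂² − η − (1/2)η². Then: (i) all five partial derivatives of J vanish at the point (τ₁, τ₂, f₁, f₂, η) = (0, 0, 0, 0, −1); (ii) sup over (f₁, f₂, η) ∈ ℝ³ of J(0, 0, f₁, f₂, η) equals 1/2, while sup over (f₁, f₂, η) ∈ ℝ³ of J(1, 1, f₁, f₂, η) equals 0. In particular, (0, 0, 0, 0, −1) is a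 stationary point of J at which the primal variables (τ₁, τ₂) = (0, 0) are not optimal for the min-max problem min_{τ₁,τ₂} max_{f₁,f₂,η} J. -/
/-!
In vertex form `J = λ / 2 - (λ / 2) (η + 1)² + ∑ z, τ z ² * c z (f, η)`, with continuous `c z`.
At `τ = 0` the sum vanishes to second order because the density ratio is `τ ²`, so `J` is
stationary at `η = -1` and its supremum there is `λ / 2`. If instead `p τ ²` is a stationary
distribution, the Bellman term is `∑ z, p z * τ z ² * f z`; the conjugate divergence `ψ y ≥ y`
outweighs it, so the supremum is `0`.
-/

open Filter Asymptotics Topology Matrix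

theorem hasFDerivAt_sq_mul_of_eq_zero {E : Type*} [NormedAddCommGroup E] [NormedSpace ℝ E]
    {u g : E → ℝ} {x : E} (hu : DifferentiableAt ℝ u x) (hux : u x = 0) (hg : ContinuousAt g x) :
    HasFDerivAt (fun y => u y ^ 2 * g y) (0 : E →L[ℝ] ℝ) x := by
  have hu_bigO : u =O[𝓝 x] fun y => y - x := by
    simpa only [hux, sub_zero] using hu.isBigO_sub
  have hug : (fun y => u y * g y) =o[𝓝 x] fun _ => (1 : ℝ) := by
    rw [isLittleO_one_iff]
    simpa only [hux, zero_mul] using hu.continuousAt.tendsto.mul hg.tendsto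
  have hprod : (fun y => u y * (u y * g y)) =o[𝓝 x] fun y => y - x := by
    simpa only [mul_one, isLittleO_norm_right] using hu_bigO.norm_right.mul_isLittleO hug
  refine .of_isLittleO (hprod.congr_left fun y => ?_)
  simp only [hux, _root_.zero_apply]
  ring

section GenDICE

variable {Z : Type*} [Fintype Z]

/-- The undiscounted (`γ = 1`) GenDICE objective on a finite set `Z` of state-action pairs, with
sampling weights `p`, transition matrix `P` under the target policy, conjugate divergence `ψ = φ*`
and normalization weight `lam`, as a function of the density ratio `x`, the dual function `f` and
the multiplier `η` of the normalization constraint. -/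
noncomputable def genDICE (ψ : ℝ → ℝ) (lam : ℝ) (p : Z → ℝ) (P : Matrix Z Z ℝ)
    (x f : Z → ℝ) (η : ℝ) : ℝ :=
  (p * x) ⬝ᵥ (P *ᵥ f) - (p * x) ⬝ᵥ (ψ ∘ f) + lam * (η * (∑ z, (p * x) z - 1) - η ^ 2 / 2)

variable {ψ : ℝ → ℝ} {lam : ℝ} {p x τ : Z → ℝ} {P : Matrix Z Z ℝ}

theorem genDICE_eq_vertex_form (f : Z → ℝ) (η : ℝ) :
    genDICE ψ lam p P x f η =
      lam / 2 + (η + 1) ^ 2 * (-lam / 2) +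
        ∑ z, x z * (p z * ((P *ᵥ f) z - ψ (f z) + lam * η)) := by
  have hsum : ∑ z, x z * (p z * ((P *ᵥ f) z - ψ (f z) + lam * η)) =
      (p * x) ⬝ᵥ (P *ᵥ f) - (p * x) ⬝ᵥ (ψ ∘ f) + lam * η * ∑ z, (p * x) z := by
    simp only [dotProduct, Pi.mul_apply, Function.comp_apply, Finset.mul_sum,
      ← Finset.sum_sub_distrib, ← Finset.sum_add_distrib]
    exact Finset.sum_congr rfl fun z _ => by ring
  rw [hsum, genDICE]
  ring

theorem hasFDerivAt_genDICE_sq (hψ : ContinuousAt ψ 0) :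
    HasFDerivAt (fun v : (Z → ℝ) × (Z → ℝ) × ℝ => genDICE ψ lam p P (v.1 ^ 2) v.2.1 v.2.2)
      (0 : _ →L[ℝ] ℝ) (0, 0, -1) := by
  have hη : HasFDerivAt
      (fun v : (Z → ℝ) × (Z → ℝ) × ℝ => (v.2.2 + 1) ^ 2 * (-lam / 2))
      (0 : _ →L[ℝ] ℝ) (0, 0, -1) :=
    hasFDerivAt_sq_mul_of_eq_zero (by fun_prop) (by simp) continuousAt_const
  have hτ (z : Z) : HasFDerivAt (fun v : (Z → ℝ) × (Z → ℝ) × ℝ =>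
      v.1 z ^ 2 * (p z * ((P *ᵥ v.2.1) z - ψ (v.2.1 z) + lam * v.2.2)))
      (0 : _ →L[ℝ] ℝ) (0, 0, -1) := by
    have hψz : ContinuousAt (fun v : (Z → ℝ) × (Z → ℝ) × ℝ => ψ (v.2.1 z)) (0, 0, -1) :=
      ContinuousAt.comp' (g := ψ) hψ (by fun_prop)
    have hPz : ContinuousAt (fun v : (Z → ℝ) × (Z → ℝ) × ℝ => (P *ᵥ v.2.1) z) (0, 0, -1) := by
      simp only [mulVec, dotProduct]
      fun_prop
    exact hasFDerivAt_sq_mul_of_eq_zero (by fun_prop) rfl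
      (continuousAt_const.mul ((hPz.sub hψz).add (by fun_prop)))
  simpa only [genDICE_eq_vertex_form, Pi.pow_apply, Finset.sum_const_zero, add_zero] using
    (hη.const_add (lam / 2)).fun_add (HasFDerivAt.fun_sum fun z (_ : z ∈ Finset.univ) => hτ z)

theorem isLUB_genDICE_zero (hlam : 0 ≤ lam) :
    IsLUB (Set.range fun v : (Z → ℝ) × ℝ => genDICE ψ lam p P 0 v.1 v.2) (lam / 2) := by
  simp only [genDICE_eq_vertex_form, Pi.zero_apply, zero_mul, Finset.sum_const_zero, add_zero]
  refine IsGreatest.isLUB ⟨⟨(0, -1), by simp⟩, ?_⟩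
  rintro _ ⟨⟨f, η⟩, rfl⟩
  nlinarith [mul_nonneg (sq_nonneg (η + 1)) hlam]

theorem genDICE_eq_of_stationary (hsum : ∑ z, (p * x) z = 1) (hstat : (p * x) ᵥ* P = p * x)
    (f : Z → ℝ) (η : ℝ) :
    genDICE ψ lam p P x f η = -((p * x) ⬝ᵥ (ψ ∘ f - f)) - lam * η ^ 2 / 2 := by
  rw [genDICE, hsum, dotProduct_mulVec, hstat, dotProduct_sub]
  ring

theorem isLUB_genDICE_of_stationary (hψ₀ : ψ 0 = 0) (hψ_ge : ∀ y, y ≤ ψ y) (hlam : 0 ≤ lam)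
    (hpx : 0 ≤ p * x) (hsum : ∑ z, (p * x) z = 1) (hstat : (p * x) ᵥ* P = p * x) :
    IsLUB (Set.range fun v : (Z → ℝ) × ℝ => genDICE ψ lam p P x v.1 v.2) 0 := by
  simp only [genDICE_eq_of_stationary hsum hstat]
  refine IsGreatest.isLUB ⟨⟨(0, 0), by simp [dotProduct, hψ₀]⟩, ?_⟩
  rintro _ ⟨⟨f, η⟩, rfl⟩
  have hpenalty : 0 ≤ (p * x) ⬝ᵥ (ψ ∘ f - f) :=
    dotProduct_nonneg_of_nonneg hpx fun z => sub_nonneg.2 (hψ_ge (f z))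
  have hη : 0 ≤ lam * η ^ 2 := by positivity
  linarith

theorem stmt15_general (hψ : ContinuousAt ψ 0) (hψ₀ : ψ 0 = 0) (hψ_ge : ∀ y, y ≤ ψ y)
    (hlam : 0 ≤ lam) (hp : 0 ≤ p) (hsum : ∑ z, (p * τ ^ 2) z = 1)
    (hstat : (p * τ ^ 2) ᵥ* P = p * τ ^ 2) :
    HasFDerivAt (fun v : (Z → ℝ) × (Z → ℝ) × ℝ => genDICE ψ lam p P (v.1 ^ 2) v.2.1 v.2.2)
      (0 : _ →L[ℝ] ℝ) (0, 0, -1) ∧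
    IsLUB (Set.range fun v : (Z → ℝ) × ℝ => genDICE ψ lam p P (0 ^ 2) v.1 v.2) (lam / 2) ∧
    IsLUB (Set.range fun v : (Z → ℝ) × ℝ => genDICE ψ lam p P (τ ^ 2) v.1 v.2) 0 := by
  refine ⟨hasFDerivAt_genDICE_sq hψ, ?_,
    isLUB_genDICE_of_stationary hψ₀ hψ_ge hlam (mul_nonneg hp fun z => sq_nonneg (τ z)) hsum hstat⟩
  simpa only [zero_pow two_ne_zero] using isLUB_genDICE_zero hlam

end GenDICE

/-- The GenDICE objective of the single-state MDP with two actions, uniform sampling distribution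
and target policy, the `χ²`-divergence and `lam = 1`. -/
noncomputable def twoActionGenDICE : (Fin 2 → ℝ) → (Fin 2 → ℝ) → ℝ → ℝ :=
  genDICE (fun y => y + y ^ 2 / 4) 1 (fun _ => 1 / 2) (.of fun _ _ => 1 / 2)

theorem twoActionGenDICE_sq (τ₁ τ₂ f₁ f₂ η : ℝ) :
    twoActionGenDICE (![τ₁, τ₂] ^ 2) ![f₁, f₂] η =
      1 / 4 * τ₁ ^ 2 * f₁ + 1 / 4 * τ₁ ^ 2 * f₂ + 1 / 4 * τ₂ ^ 2 * f₁ + 1 / 4 * τ₂ ^ 2 * f₂ -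
      1 / 2 * τ₁ ^ 2 * (f₁ + 1 / 4 * f₁ ^ 2) - 1 / 2 * τ₂ ^ 2 * (f₂ + 1 / 4 * f₂ ^ 2) +
      1 / 2 * η * τ₁ ^ 2 + 1 / 2 * η * τ₂ ^ 2 - η - 1 / 2 * η ^ 2 := by
  simp only [twoActionGenDICE, genDICE, mulVec, dotProduct, Fin.sum_univ_two, of_apply,
    Pi.mul_apply, Pi.pow_apply, Function.comp_apply, cons_val_zero, cons_val_one]
  ring

theorem range_finTwo_prod {α β γ : Type*} (F : (Fin 2 → α) → β → γ) :
    (Set.range fun q : α × α × β => F ![q.1, q.2.1] q.2.2) =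
      Set.range fun v : (Fin 2 → α) × β => F v.1 v.2 :=
  ((Equiv.prodAssoc α α β).symm.trans
    ((finTwoArrowEquiv α).symm.prodCongr (.refl β))).surjective.range_comp
      fun v : (Fin 2 → α) × β => F v.1 v.2

theorem hasDerivAt_partials_of_hasFDerivAt_zero {G : (Fin 2 → ℝ) × (Fin 2 → ℝ) × ℝ → ℝ}
    {a b c d e : ℝ} (hG : HasFDerivAt G (0 : _ →L[ℝ] ℝ) (![a, b], ![c, d], e)) :
    HasDerivAt (fun t => G (![t, b], ![c, d], e)) 0 a ∧
    HasDerivAt (fun t => G (![a, t], ![c, d], e)) 0 b ∧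
    HasDerivAt (fun t => G (![a, b], ![t, d], e)) 0 c ∧
    HasDerivAt (fun t => G (![a, b], ![c, t], e)) 0 d ∧
    HasDerivAt (fun t => G (![a, b], ![c, d], t)) 0 e := by
  have hcurve {γ : ℝ → (Fin 2 → ℝ) × (Fin 2 → ℝ) × ℝ} {t : ℝ} (hγ : DifferentiableAt ℝ γ t)
      (hγt : γ t = (![a, b], ![c, d], e)) : HasDerivAt (fun s => G (γ s)) 0 t :=
    (hγt ▸ hG).comp_hasDerivAt t hγ.hasDerivAt
  have hfst (r t : ℝ) : DifferentiableAt ℝ (fun s => ![s, r]) t :=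
    differentiableAt_pi.2 (Fin.forall_fin_two.2 ⟨differentiableAt_id, differentiableAt_const r⟩)
  have hsnd (r t : ℝ) : DifferentiableAt ℝ (fun s => ![r, s]) t :=
    differentiableAt_pi.2 (Fin.forall_fin_two.2 ⟨differentiableAt_const r, differentiableAt_id⟩)
  exact ⟨hcurve (by fun_prop) rfl, hcurve (by fun_prop) rfl, hcurve (by fun_prop) rfl,
    hcurve (by fun_prop) rfl, hcurve (by fun_prop) rfl⟩

/-- The hard example for GenDICE. For
`J(τ₁,τ₂,f₁,f₂,η) = (1/4)τ₁²f₁ + (1/4)τ₁²f₂ + (1/4)τ₂²f₁ + (1/4)τ₂²f₂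
  - (1/2)τ₁²(f₁ + (1/4)f₁²) - (1/2)τ₂²(f₂ + (1/4)f₂²)
  + (1/2)ητ₁² + (1/2)ητ₂² - η - (1/2)η²`:
(i) all five partial derivatives of `J` vanish at `(0,0,0,0,-1)`;
(ii) `sup_{f₁,f₂,η} J(0,0,f₁,f₂,η) = 1/2` while `sup_{f₁,f₂,η} J(1,1,f₁,f₂,η) = 0`,
so the stationary point `(0,0,0,0,-1)` is not primal-optimal for the min-max
problem. -/
theorem stmt15 (J : ℝ → ℝ → ℝ → ℝ → ℝ → ℝ)
    (hJ : ∀ τ₁ τ₂ f₁ f₂ η, J τ₁ τ₂ f₁ f₂ η =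
      (1/4) * τ₁^2 * f₁ + (1/4) * τ₁^2 * f₂ + (1/4) * τ₂^2 * f₁ + (1/4) * τ₂^2 * f₂
      - (1/2) * τ₁^2 * (f₁ + (1/4) * f₁^2) - (1/2) * τ₂^2 * (f₂ + (1/4) * f₂^2)
      + (1/2) * η * τ₁^2 + (1/2) * η * τ₂^2 - η - (1/2) * η^2) :
    (HasDerivAt (fun t => J t 0 0 0 (-1)) 0 0 ∧
     HasDerivAt (fun t => J 0 t 0 0 (-1)) 0 0 ∧
     HasDerivAt (fun t => J 0 0 t 0 (-1)) 0 0 ∧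
     HasDerivAt (fun t => J 0 0 0 t (-1)) 0 0 ∧
     HasDerivAt (fun t => J 0 0 0 0 t) 0 (-1)) ∧
    IsLUB (Set.range fun p : ℝ × ℝ × ℝ => J 0 0 p.1 p.2.1 p.2.2) (1/2) ∧
    IsLUB (Set.range fun p : ℝ × ℝ × ℝ => J 1 1 p.1 p.2.1 p.2.2) 0 := by
  obtain rfl : J = fun τ₁ τ₂ f₁ f₂ η => twoActionGenDICE (![τ₁, τ₂] ^ 2) ![f₁, f₂] η := by
    funext τ₁ τ₂ f₁ f₂ η
    rw [hJ, twoActionGenDICE_sq]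
  obtain ⟨hcrit, hsup_zero, hsup_one⟩ := stmt15_general (ψ := fun y => y + y ^ 2 / 4) (lam := 1)
    (p := fun _ : Fin 2 => 1 / 2) (τ := ![1, 1]) (P := .of fun _ _ => 1 / 2)
    (by fun_prop) (by norm_num) (fun y => by linarith [sq_nonneg y]) zero_le_one
    (fun _ => by norm_num) (by norm_num [Fin.sum_univ_two])
    (by ext i; fin_cases i <;> norm_num [vecMul, dotProduct, Fin.sum_univ_two])
  have hzero : (0 : Fin 2 → ℝ) = ![0, 0] := by ext i; fin_cases i <;> rfl
  rw [hzero] at hcrit hsup_zero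
  exact ⟨hasDerivAt_partials_of_hasFDerivAt_zero hcrit,
    (range_finTwo_prod (twoActionGenDICE (![0, 0] ^ 2))).symm ▸ hsup_zero,
    (range_finTwo_prod (twoActionGenDICE (![1, 1] ^ 2))).symm ▸ hsup_one⟩
end
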